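/- Assume the dual pair (E, E') is (K) over A. If the left A-module E' is injective, then the right A-module E is flat. -/

import Mathlib

/-- Right multiplication `x ↦ x P` by the matrix `P ∈ A^{q×r}` on row vectors
`x ∈ A^{1×q}`: `(x P) j = ∑ i, x i * P i j`. -/
def rmulA {A : Type*} [Ring A] {q r : ℕ} (P : Matrix (Fin q) (Fin r) A) :
    (Fin q → A) → (Fin r → A) :=
  fun x j => ∑ i, x i * P i j

/-- Right multiplication `x ↦ x P` by the matrix `P ∈ A^{q×r}` on row vectors
`x ∈ E^{1×q}` with entries in a right `A`-module `E` (the right action of `A` on `E`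
being encoded as a left `Aᵐᵒᵖ`-action): `(x P) j = ∑ i, x i • P i j`. -/
def rmulE {A E : Type*} [Ring A] [AddCommGroup E] [Module Aᵐᵒᵖ E] {q r : ℕ}
    (P : Matrix (Fin q) (Fin r) A) : (Fin q → E) → (Fin r → E) :=
  fun x j => ∑ i, MulOpposite.op (P i j) • x i

/-- Left multiplication `x' ↦ P x'` by the matrix `P ∈ A^{q×r}` on column vectors
`x' ∈ (E')^r` with entries in a left `A`-module `E'`: `(P x') i = ∑ j, P i j • x' j`. -/
def lmulE' {A E' : Type*} [Ring A] [AddCommGroup E'] [Module A E'] {q r : ℕ}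
    (P : Matrix (Fin q) (Fin r) A) : (Fin r → E') → (Fin q → E') :=
  fun x' i => ∑ j, P i j • x' j

/-- The weak topology on `X` determined by a pairing `B : X → Y → 𝕜`,
i.e. the coarsest topology making every map `x ↦ B x y` (`y ∈ Y`) continuous. -/
noncomputable def weakTopology {𝕜 X Y : Type*} [TopologicalSpace 𝕜]
    (B : X → Y → 𝕜) : TopologicalSpace X :=
  TopologicalSpace.induced B Pi.topologicalSpace

/-- Flatness of the right `A`-module `E` (`A` not necessarily commutative), expressed
by the standard equational criterion: every relation `∑ i, x i • a i = 0` in `E`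
comes from relations in `A`. -/
def RightFlat (A E : Type*) [Ring A] [AddCommGroup E] [Module Aᵐᵒᵖ E] : Prop :=
  ∀ (q : ℕ) (a : Fin q → A) (x : Fin q → E),
    ∑ i, MulOpposite.op (a i) • x i = 0 →
    ∃ (r : ℕ) (y : Fin r → E) (Q : Matrix (Fin r) (Fin q) A),
      (∀ j, ∑ i, Q j i * a i = 0) ∧ ∀ i, x i = ∑ j, MulOpposite.op (Q j i) • y j

/-- The weak topology `σ(E^{1×k}, (E')^k)` on `E^{1×k}` determined by the componentwise
extension `⟨x, x'⟩ = ∑ i, ⟨x i, x' i⟩` of the duality bracket `B` to `E^{1×k} × (E')^k`. -/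
noncomputable def sigmaRow {𝕜 E E' : Type*} [RCLike 𝕜] [AddCommGroup E] [Module 𝕜 E]
    [AddCommGroup E'] [Module 𝕜 E'] (B : E →ₗ[𝕜] E' →ₗ[𝕜] 𝕜) (k : ℕ) :
    TopologicalSpace (Fin k → E) :=
  weakTopology fun (x : Fin k → E) (x' : Fin k → E') => ∑ i, B (x i) (x' i)

/-- The weak topology `σ((E')^k, E^{1×k})` on `(E')^k` determined by the componentwise
extension `⟨x, x'⟩ = ∑ i, ⟨x i, x' i⟩` of the duality bracket `B` to `E^{1×k} × (E')^k`. -/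
noncomputable def sigmaCol {𝕜 E E' : Type*} [RCLike 𝕜] [AddCommGroup E] [Module 𝕜 E]
    [AddCommGroup E'] [Module 𝕜 E'] (B : E →ₗ[𝕜] E' →ₗ[𝕜] 𝕜) (k : ℕ) :
    TopologicalSpace (Fin k → E') :=
  weakTopology fun (x' : Fin k → E') (x : Fin k → E) => ∑ i, B (x i) (x' i)

/-!
A relation `∑ i, x i • a i = 0` says that `x` is killed by right multiplication by the column `a`.
Coherence of `A` gives a matrix `Q` whose rows generate the left relations of `a`, so that
`A^{1×r} → A^{1×q} → A`, given by `Q` and then `a`, is exact. Applying `Hom_A(-, E')` with `E'`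
injective, `E' → (E')^q → (E')^r` is exact and the image of `Q` on `(E')^q` is the annihilator of a
set, hence weakly closed. The (K) property makes the image of `Q` on `E^{1×r}` weakly closed, hence
equal to the annihilator of `ker (Q •) = im (a •)`; and `x` lies in that annihilator since
`⟨x, a e⟩ = ⟨x a, e⟩ = 0`.
-/

section WeakTopology

open Topology

theorem isClosed_weakTopology_annihilator {𝕜 X Y : Type*} [TopologicalSpace 𝕜] [T1Space 𝕜]
    [Zero 𝕜] (B : X → Y → 𝕜) (T : Set Y) :
    IsClosed[weakTopology B] {x | ∀ y ∈ T, B x y = 0} := by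
  let := weakTopology B
  have hcont (y : Y) : Continuous (B · y) := (continuous_apply y).comp continuous_induced_dom
  simp only [Set.ofPred_forall]
  exact isClosed_biInter fun y _ => isClosed_singleton.preimage (hcont y)

theorem exists_finset_of_notMem_of_isClosed_weakTopology {𝕜 X Y : Type*} [TopologicalSpace 𝕜]
    {B : X → Y → 𝕜} {S : Set X} (hS : IsClosed[weakTopology B] S) {x : X} (hx : x ∉ S) :
    ∃ F : Finset Y, ∀ z, (∀ y ∈ F, B z y = B x y) → z ∉ S := by
  let := weakTopology B
  obtain ⟨U, hU, hUS⟩ := hS.isOpen_compl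
  have hmem (z : X) : B z ∈ U ↔ z ∉ S := Set.ext_iff.mp hUS z
  obtain ⟨F, u, hu, hFU⟩ := isOpen_pi_iff.mp hU _ ((hmem x).mpr hx)
  refine ⟨F, fun z hz => (hmem z).mp (hFU fun y hy => ?_)⟩
  rw [hz y hy]
  exact (hu y hy).2

variable {𝕜 X Y : Type*} [Field 𝕜] [TopologicalSpace 𝕜] [AddCommGroup X] [Module 𝕜 X]
  [AddCommGroup Y] [Module 𝕜 Y]

theorem exists_orthogonal_of_notMem_of_isClosed_weakTopology {C : X →ₗ[𝕜] Y →ₗ[𝕜] 𝕜}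
    {S : Submodule 𝕜 X} (hS : IsClosed[weakTopology fun x y => C x y] (S : Set X)) {x : X}
    (hx : x ∉ S) : ∃ y, (∀ s ∈ S, C s y = 0) ∧ C x y ≠ 0 := by
  obtain ⟨F, hF⟩ := exists_finset_of_notMem_of_isClosed_weakTopology hS hx
  let L : F → X →ₗ[𝕜] 𝕜 := fun y => C.flip y
  have hxL : x ∉ S ⊔ ⨅ y, LinearMap.ker (L y) := by
    rw [Submodule.mem_sup]
    rintro ⟨s, hs, t, ht, rfl⟩
    have ht₀ : ∀ y ∈ F, C t y = 0 := fun y hy => (Submodule.mem_iInf _).mp ht ⟨y, hy⟩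
    exact hF s (fun y hy => by simp [ht₀ y hy]) hs
  obtain ⟨f, hfx, hf⟩ := Submodule.exists_le_ker_of_notMem hxL
  rw [sup_le_iff] at hf
  have hspan : Submodule.span 𝕜 (Set.range L) ≤ LinearMap.range C.flip :=
    Submodule.span_le.mpr (Set.range_subset_iff.mpr fun y => ⟨y, rfl⟩)
  obtain ⟨y, rfl⟩ := hspan (mem_span_of_iInf_ker_le_ker hf.2)
  exact ⟨y, hf.1, hfx⟩

theorem mem_range_iff_of_isClosed_weakTopology {Z W : Type*} [AddCommGroup Z] [Module 𝕜 Z]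
    [AddCommGroup W] [Module 𝕜 W] {C : X →ₗ[𝕜] Y →ₗ[𝕜] 𝕜} {D : Z →ₗ[𝕜] W →ₗ[𝕜] 𝕜}
    (hD : D.SeparatingRight) {u : Z →ₗ[𝕜] X} {v : Y → W} (huv : ∀ z y, C (u z) y = D z (v y))
    (hu : IsClosed[weakTopology fun x y => C x y] (Set.range u)) {x : X} :
    x ∈ Set.range u ↔ ∀ y, v y = 0 → C x y = 0 := by
  constructor
  · rintro ⟨z, rfl⟩ y hy
    rw [huv, hy, map_zero]
  · contrapose!
    intro hx
    obtain ⟨y, hy, hxy⟩ :=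
      exists_orthogonal_of_notMem_of_isClosed_weakTopology (S := LinearMap.range u) hu hx
    exact ⟨y, hD _ fun z => (huv z y).symm.trans (hy _ ⟨z, rfl⟩), hxy⟩

end WeakTopology

section PiPairing

variable {𝕜 E E' : Type*} [CommSemiring 𝕜] [AddCommMonoid E] [Module 𝕜 E] [AddCommMonoid E']
  [Module 𝕜 E']

/-- The componentwise extension `⟨x, x'⟩ = ∑ i, ⟨x i, x' i⟩` of a pairing to families indexed by
a finite type; for `ι = Fin k` it is the pairing underlying `sigmaRow` and `sigmaCol`. -/
def piPairing (B : E →ₗ[𝕜] E' →ₗ[𝕜] 𝕜) (ι : Type*) [Fintype ι] :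
    (ι → E) →ₗ[𝕜] (ι → E') →ₗ[𝕜] 𝕜 :=
  LinearMap.mk₂ 𝕜 (fun x x' => ∑ i, B (x i) (x' i))
    (by simp [Finset.sum_add_distrib]) (by simp [Finset.mul_sum])
    (by simp [Finset.sum_add_distrib]) (by simp [Finset.mul_sum])

theorem piPairing_apply (B : E →ₗ[𝕜] E' →ₗ[𝕜] 𝕜) {ι : Type*} [Fintype ι] (x : ι → E)
    (x' : ι → E') : piPairing B ι x x' = ∑ i, B (x i) (x' i) :=
  rfl

theorem separatingRight_piPairing {B : E →ₗ[𝕜] E' →ₗ[𝕜] 𝕜} (hB : B.SeparatingRight)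
    (ι : Type*) [Fintype ι] : (piPairing B ι).SeparatingRight := by
  classical
  refine fun x' hx' => funext fun i => hB _ fun z => ?_
  have hsingle := hx' (Pi.single i z)
  rwa [piPairing_apply, Fintype.sum_eq_single i (fun j hj => by simp [hj]),
    Pi.single_eq_same] at hsingle

end PiPairing

theorem row_vecMul_eq_zero_of_exact {A : Type*} [Semiring A] {l m n : Type*} [Fintype l]
    [Fintype m] {Q : Matrix l m A} {P : Matrix m n A}
    (hQP : Function.Exact Q.vecMulLinear P.vecMulLinear) (i : l) : Matrix.vecMul (Q i) P = 0 := by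
  classical
  exact (hQP (Q i)).mpr ⟨Pi.single i 1, by simp [Matrix.row]⟩

section InjectiveModule

open Matrix

variable {A M : Type*} [Ring A] [AddCommGroup M] [Module A M]

theorem exists_comp_eq_of_ker_le_ker_of_baer (hM : Module.Baer A M) {N P : Type*}
    [AddCommGroup N] [Module A N] [AddCommGroup P] [Module A P] {f : N →ₗ[A] P} {g : N →ₗ[A] M}
    (hfg : LinearMap.ker f ≤ LinearMap.ker g) : ∃ h : P →ₗ[A] M, h ∘ₗ f = g := by
  have hinj : Function.Injective ((LinearMap.ker f).liftQ f le_rfl) :=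
    LinearMap.ker_eq_bot.mp (Submodule.ker_liftQ_eq_bot' _ f rfl)
  obtain ⟨h, hh⟩ := hM.extension_property _ hinj ((LinearMap.ker f).liftQ g hfg)
  exact ⟨h, LinearMap.ext fun n => LinearMap.congr_fun hh (Submodule.Quotient.mk n)⟩

theorem sum_smul_lmulE' {q r : ℕ} (P : Matrix (Fin q) (Fin r) A) (v : Fin q → A)
    (x' : Fin r → M) : ∑ i, v i • lmulE' P x' i = ∑ j, (v ᵥ* P) j • x' j := by
  simp only [lmulE', vecMul, dotProduct, Finset.smul_sum, Finset.sum_smul, smul_smul]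
  exact Finset.sum_comm

theorem range_lmulE'_of_baer (hM : Module.Baer A M) {q r : ℕ} (P : Matrix (Fin q) (Fin r) A) :
    Set.range (lmulE' P) =
      {y : Fin q → M | ∀ v : Fin q → A, v ᵥ* P = 0 → ∑ i, v i • y i = 0} := by
  ext y
  constructor
  · rintro ⟨x', rfl⟩ v hv
    simp [sum_smul_lmulE', hv]
  · intro hy
    obtain ⟨h, hh⟩ := exists_comp_eq_of_ker_le_ker_of_baer hM
      (f := P.vecMulLinear) (g := Fintype.linearCombination A y) hy
    refine ⟨fun j => h (Pi.single j 1), funext fun i => ?_⟩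
    calc ∑ j, P i j • h (Pi.single j 1)
        = h (P i) := by
          simp only [← map_smul, ← map_sum, ← Pi.single_smul, smul_eq_mul, mul_one,
            Finset.univ_sum_single]
      _ = h (P.vecMulLinear (Pi.single i 1)) := by simp [row]
      _ = Fintype.linearCombination A y (Pi.single i 1) := LinearMap.congr_fun hh _
      _ = y i := by simp

theorem exact_lmulE'_of_baer (hM : Module.Baer A M) {q r k : ℕ} {Q : Matrix (Fin r) (Fin q) A}
    {P : Matrix (Fin q) (Fin k) A} (hQP : Function.Exact Q.vecMulLinear P.vecMulLinear) :
    Function.Exact (lmulE' (E' := M) P) (lmulE' Q) := by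
  intro x'
  rw [range_lmulE'_of_baer hM P]
  constructor
  · intro hx' v hv
    obtain ⟨w, rfl⟩ := (hQP v).mp hv
    simp [← sum_smul_lmulE', hx']
  · intro hx'
    exact funext fun j => hx' (Q j) (row_vecMul_eq_zero_of_exact hQP j)

end InjectiveModule

section Coherent

open Matrix

variable {A : Type*} [Ring A]

/-- Left coherence of a ring: the left relations between finitely many elements form a finitely
generated left module. -/
def LeftCoherent (A : Type*) [Ring A] : Prop :=
  ∀ (q : ℕ) (a : Fin q → A), (LinearMap.ker (Fintype.linearCombination A a)).FG

theorem leftCoherent_of_isNoetherianRing [IsNoetherianRing A] : LeftCoherent A :=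
  fun _ _ => IsNoetherian.noetherian _

theorem LeftCoherent.exists_exact_vecMulLinear (hA : LeftCoherent A) {q : ℕ} (a : Fin q → A) :
    ∃ (r : ℕ) (Q : Matrix (Fin (r + 1)) (Fin q) A),
      Function.Exact Q.vecMulLinear (replicateCol (Fin 1) a).vecMulLinear := by
  obtain ⟨r, Q₀, hQ₀⟩ := Submodule.fg_iff_exists_fin_generating_family.mp (hA q a)
  -- The zero row keeps the number of rows positive even when `a` has no relations.
  refine ⟨r, of (Fin.cons 0 Q₀), LinearMap.exact_iff.mpr ?_⟩
  calc LinearMap.ker (replicateCol (Fin 1) a).vecMulLinear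
      = LinearMap.ker (Fintype.linearCombination A a) := by
        ext v
        exact ⟨fun hv => congrFun hv 0, fun hv => funext fun _ => hv⟩
    _ = Submodule.span A (Set.range (Fin.cons 0 Q₀ : Fin (r + 1) → Fin q → A)) := by
        rw [Fin.range_cons, Submodule.span_insert_zero, hQ₀]
    _ = LinearMap.range (of (Fin.cons 0 Q₀)).vecMulLinear := (range_vecMulLinear _).symm

end Coherent

section Transpose

open Matrix Topology

variable {𝕜 A E E' : Type*} [CommSemiring 𝕜] [Ring A] [AddCommGroup E] [Module 𝕜 E]
  [AddCommGroup E'] [Module 𝕜 E'] [Module A E'] [Module Aᵐᵒᵖ E]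

theorem piPairing_rmulE {B : E →ₗ[𝕜] E' →ₗ[𝕜] 𝕜}
    (hcomp : ∀ (x : E) (a : A) (x' : E'), B (MulOpposite.op a • x) x' = B x (a • x'))
    {q r : ℕ} (P : Matrix (Fin q) (Fin r) A) (x : Fin q → E) (x' : Fin r → E') :
    piPairing B (Fin r) (rmulE P x) x' = piPairing B (Fin q) x (lmulE' P x') := by
  simp only [piPairing_apply, rmulE, lmulE', map_sum, LinearMap.sum_apply, hcomp]
  exact Finset.sum_comm

/-- The map `rmulE P` as a `𝕜`-linear map, so that its range is a subspace. -/
def rmulELinear (𝕜 : Type*) {A E : Type*} [Semiring 𝕜] [Ring A] [AddCommGroup E] [Module 𝕜 E]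
    [Module Aᵐᵒᵖ E] [SMulCommClass 𝕜 Aᵐᵒᵖ E] {q r : ℕ} (P : Matrix (Fin q) (Fin r) A) :
    (Fin q → E) →ₗ[𝕜] (Fin r → E) where
  toFun := rmulE P
  map_add' x y := by
    ext j
    simp [rmulE, Finset.sum_add_distrib]
  map_smul' c x := by
    ext j
    simp [rmulE, Finset.smul_sum, smul_comm c]

theorem isClosed_range_lmulE'_of_baer [TopologicalSpace 𝕜] [T1Space 𝕜] {B : E →ₗ[𝕜] E' →ₗ[𝕜] 𝕜}
    (hB : B.SeparatingRight)
    (hcomp : ∀ (x : E) (a : A) (x' : E'), B (MulOpposite.op a • x) x' = B x (a • x'))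
    (hE' : Module.Baer A E') {q r : ℕ} (P : Matrix (Fin q) (Fin r) A) :
    IsClosed[weakTopology fun y x => piPairing B (Fin q) x y]
      (Set.range (lmulE' (E' := E') P)) := by
  have hpair (v : Fin q → A) (z : E) (y : Fin q → E') :
      piPairing B (Fin q) (fun i => MulOpposite.op (v i) • z) y = B z (∑ i, v i • y i) := by
    simp only [piPairing_apply, hcomp, map_sum]
  convert isClosed_weakTopology_annihilator (fun y x => piPairing B (Fin q) x y)
    {x | ∃ v : Fin q → A, v ᵥ* P = 0 ∧ ∃ z : E, x = fun i => MulOpposite.op (v i) • z}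
  rw [range_lmulE'_of_baer hE' P]
  ext y
  constructor
  · rintro hy _ ⟨v, hv, z, rfl⟩
    rw [hpair, hy v hv, map_zero]
  · exact fun hy v hv => hB _ fun z => (hpair v z y).symm.trans (hy _ ⟨v, hv, z, rfl⟩)

end Transpose

section Duality

open Matrix Topology

variable {𝕜 A E E' : Type*} [Field 𝕜] [TopologicalSpace 𝕜] [Ring A] [AddCommGroup E] [Module 𝕜 E]
  [AddCommGroup E'] [Module 𝕜 E'] [Module A E'] [Module Aᵐᵒᵖ E] [SMulCommClass 𝕜 Aᵐᵒᵖ E]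

theorem mem_range_rmulE_of_rmulE_eq_zero {B : E →ₗ[𝕜] E' →ₗ[𝕜] 𝕜}
    (hB : B.SeparatingRight)
    (hcomp : ∀ (x : E) (a : A) (x' : E'), B (MulOpposite.op a • x) x' = B x (a • x'))
    {q r k : ℕ} {Q : Matrix (Fin r) (Fin q) A} {P : Matrix (Fin q) (Fin k) A}
    (hPQ : Function.Exact (lmulE' (E' := E') P) (lmulE' Q))
    (hQ : IsClosed[weakTopology fun x x' => piPairing B (Fin q) x x']
      (Set.range (rmulE (E := E) Q)))
    {x : Fin q → E} (hx : rmulE P x = 0) : x ∈ Set.range (rmulE (E := E) Q) := by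
  refine (mem_range_iff_of_isClosed_weakTopology (u := rmulELinear 𝕜 Q)
    (separatingRight_piPairing hB _) (piPairing_rmulE hcomp Q) hQ).mpr fun x' hx' => ?_
  obtain ⟨e, rfl⟩ := (hPQ x').mp hx'
  rw [← piPairing_rmulE hcomp, hx, map_zero, LinearMap.zero_apply]

theorem flat_of_injective_of_kothe_general [T1Space 𝕜] (hA : LeftCoherent A)
    (B : E →ₗ[𝕜] E' →ₗ[𝕜] 𝕜) (hB : B.SeparatingRight)
    (hcomp : ∀ (x : E) (a : A) (x' : E'), B (MulOpposite.op a • x) x' = B x (a • x'))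
    (hK : ∀ (q r : ℕ), 0 < q → 0 < r → ∀ P : Matrix (Fin q) (Fin r) A,
      IsClosed[weakTopology fun x' x => piPairing B (Fin q) x x']
        (Set.range (lmulE' (E' := E') P)) →
      IsClosed[weakTopology fun x x' => piPairing B (Fin r) x x']
        (Set.range (rmulE (E := E) P)))
    (hE' : Module.Baer A E') : RightFlat A E := by
  intro q a x hxa
  rcases q.eq_zero_or_pos with rfl | hq
  · exact ⟨0, 0, 0, fun j => j.elim0, fun i => i.elim0⟩
  obtain ⟨r, Q, hQa⟩ := hA.exists_exact_vecMulLinear a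
  have hclosed := hK (r + 1) q r.succ_pos hq Q (isClosed_range_lmulE'_of_baer hB hcomp hE' Q)
  obtain ⟨y, rfl⟩ := mem_range_rmulE_of_rmulE_eq_zero hB hcomp (exact_lmulE'_of_baer hE' hQa)
    hclosed (funext fun _ => hxa)
  refine ⟨r + 1, y, Q, fun j => ?_, fun _ => rfl⟩
  exact congrFun (row_vecMul_eq_zero_of_exact hQa j) 0

end Duality

/-- If the dual pair `(E, E')` is `(K)` (Köthe) over `A` and the left `A`-module `E'`
is injective, then the right `A`-module `E` is flat. -/
theorem flat_of_injective_of_kothe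
    {𝕜 : Type} [RCLike 𝕜] {A : Type} [Ring A] [IsDomain A] [Algebra 𝕜 A]
    [IsNoetherianRing A] [IsNoetherianRing Aᵐᵒᵖ]
    {E E' : Type} [AddCommGroup E] [Module 𝕜 E] [AddCommGroup E'] [Module 𝕜 E']
    [Module A E'] [IsScalarTower 𝕜 A E'] [SMulCommClass 𝕜 A E']
    [Module Aᵐᵒᵖ E] [IsScalarTower 𝕜 Aᵐᵒᵖ E] [SMulCommClass 𝕜 Aᵐᵒᵖ E]
    (B : E →ₗ[𝕜] E' →ₗ[𝕜] 𝕜)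
    (hB₁ : ∀ x : E, (∀ x' : E', B x x' = 0) → x = 0)
    (hB₂ : ∀ x' : E', (∀ x : E, B x x' = 0) → x' = 0)
    (hsemi : ∀ a : A, @Continuous E' E' (weakTopology fun x' x => B x x')
      (weakTopology fun x' x => B x x') (fun x' => a • x'))
    (hcomp : ∀ (x : E) (a : A) (x' : E'), B (MulOpposite.op a • x) x' = B x (a • x'))
    (hK : ∀ (q r : ℕ), 0 < q → 0 < r → ∀ P : Matrix (Fin q) (Fin r) A,
      @IsClosed _ (sigmaRow B r) (Set.range (rmulE (E := E) P)) ↔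
      @IsClosed _ (sigmaCol B q) (Set.range (lmulE' (E' := E') P)))
    (hinj : Module.Injective A E') :
    RightFlat A E := by
  exact flat_of_injective_of_kothe_general leftCoherent_of_isNoetherianRing B hB₂ hcomp
    (fun q r hq hr P => (hK q r hq hr P).mpr) (Module.Baer.of_injective hinj)
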